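/- Let U, V1, V2, Y1, Y2 be random variables defined on a common finite probability space. If I(V1;V2|U) = 0, I(V1;V2|Y1,U) = 0, and I(V1;V2|Y2,U) = 0, then I(V1;Y1|V2,U) − I(V1;Y2|V2,U) = I(V1;Y1|U) − I(V1;Y2|U) and I(V2;Y2|V1,U) − I(V2;Y1|V1,U) = I(V2;Y2|U) − I(V2;Y1|U); in particular, the two expressions inside each minimum of the outer bound of Theorem 1 coincide. -/

import Mathlib

open scoped BigOperators

open Classical in
/-- Probability mass `P(X = x)` under the weight function `p` on the finite sample space. -/
noncomputable def pm {Ω α : Type*} [Fintype Ω] [Fintype α]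
    (p : Ω → ℝ) (X : Ω → α) (x : α) : ℝ :=
  ∑ ω, if X ω = x then p ω else 0

/-- Shannon entropy `H(X)` (with the convention `0 · log 0 = 0`, since `Real.log 0 = 0`). -/
noncomputable def ent {Ω α : Type*} [Fintype Ω] [Fintype α]
    (p : Ω → ℝ) (X : Ω → α) : ℝ :=
  ∑ x, -(pm p X x * Real.log (pm p X x))

/-- Conditional entropy `H(X|Y) = H(X,Y) - H(Y)`. -/
noncomputable def condEnt {Ω α β : Type*} [Fintype Ω] [Fintype α] [Fintype β]
    (p : Ω → ℝ) (X : Ω → α) (Y : Ω → β) : ℝ :=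
  ent p (fun ω => (X ω, Y ω)) - ent p Y

/-- Mutual information `I(X;Y) = H(X) + H(Y) - H(X,Y)`. -/
noncomputable def mutI {Ω α β : Type*} [Fintype Ω] [Fintype α] [Fintype β]
    (p : Ω → ℝ) (X : Ω → α) (Y : Ω → β) : ℝ :=
  ent p X + ent p Y - ent p (fun ω => (X ω, Y ω))

/-- Conditional mutual information `I(X;Y|Z) = H(X|Z) - H(X|(Y,Z))`. -/
noncomputable def condMutI {Ω α β γ : Type*} [Fintype Ω] [Fintype α] [Fintype β] [Fintype γ]
    (p : Ω → ℝ) (X : Ω → α) (Y : Ω → β) (Z : Ω → γ) : ℝ :=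
  condEnt p X Z - condEnt p X (fun ω => (Y ω, Z ω))

/-!
Expanding `I(X;(Y,W)|Z)` by the chain rule in both orders gives
`I(X;Y|W,Z) - I(X;Y|Z) = I(X;W|Y,Z) - I(X;W|Z)`: the effect of additionally conditioning on `W` is
the change of `I(X;W|Z)` caused by observing `Y`. With `X = V1`, `W = V2`, `Z = U`, this change is
the same for `Y = Y1` and `Y = Y2` as soon as `I(V1;V2|Y1,U) = I(V1;V2|Y2,U)`; the second identity
follows by exchanging the roles of `V1` and `V2`.
-/

theorem prod_left_comm_injective {α β γ : Type*} :
    Function.Injective fun t : α × β × γ => (t.2.1, t.1, t.2.2) :=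
  Function.LeftInverse.injective (g := fun t => (t.2.1, t.1, t.2.2)) fun _ => rfl

section Entropy

variable {Ω α β γ δ ε : Type*} [Fintype Ω] [Fintype α] [Fintype β] [Fintype γ] [Fintype δ]
  [Fintype ε] (p : Ω → ℝ)

open Classical in
theorem pm_comp_of_injective (X : Ω → α) {f : α → β} (hf : f.Injective) (x : α) :
    pm p (fun ω => f (X ω)) (f x) = pm p X x :=
  Finset.sum_congr rfl fun _ _ => if_congr hf.eq_iff rfl rfl

theorem pm_eq_zero_of_notMem_range (X : Ω → α) {x : α} (hx : x ∉ Set.range X) :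
    pm p X x = 0 :=
  Finset.sum_eq_zero fun ω _ => if_neg fun h => hx ⟨ω, h⟩

theorem ent_comp_of_injective (X : Ω → α) {f : α → β} (hf : f.Injective) :
    ent p (fun ω => f (X ω)) = ent p X := by
  refine (Fintype.sum_of_injective f hf _ _ (fun y hy => ?_) fun x => ?_).symm
  · have hy' : y ∉ Set.range fun ω => f (X ω) := fun ⟨ω, hω⟩ => hy ⟨X ω, hω⟩
    simp [pm_eq_zero_of_notMem_range p _ hy']
  · rw [pm_comp_of_injective p X hf]

theorem condEnt_comp_right_of_injective (X : Ω → α) (Y : Ω → β) {f : β → γ}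
    (hf : f.Injective) : condEnt p X (fun ω => f (Y ω)) = condEnt p X Y :=
  congrArg₂ (· - ·)
    (ent_comp_of_injective p (fun ω => (X ω, Y ω)) (Function.injective_id.prodMap hf))
    (ent_comp_of_injective p Y hf)

theorem condMutI_comm (X : Ω → α) (Y : Ω → β) (Z : Ω → γ) :
    condMutI p X Y Z = condMutI p Y X Z := by
  have h_joint : ent p (fun ω => (Y ω, X ω, Z ω)) = ent p (fun ω => (X ω, Y ω, Z ω)) :=
    ent_comp_of_injective p (fun ω => (X ω, Y ω, Z ω)) prod_left_comm_injective
  simp only [condMutI, condEnt, h_joint]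
  ring

theorem condMutI_sub_condMutI_comm (X : Ω → α) (Y : Ω → β) (W : Ω → γ) (Z : Ω → δ) :
    condMutI p X Y (fun ω => (W ω, Z ω)) - condMutI p X Y Z =
      condMutI p X W (fun ω => (Y ω, Z ω)) - condMutI p X W Z := by
  have h_joint : condEnt p X (fun ω => (Y ω, W ω, Z ω)) = condEnt p X (fun ω => (W ω, Y ω, Z ω)) :=
    condEnt_comp_right_of_injective p X (fun ω => (W ω, Y ω, Z ω)) prod_left_comm_injective
  simp only [condMutI, h_joint]
  ring

theorem condMutI_sub_eq_of_condMutI_eq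
    (X : Ω → α) (W : Ω → β) (Y₁ : Ω → γ) (Y₂ : Ω → δ) (Z : Ω → ε)
    (h : condMutI p X W (fun ω => (Y₁ ω, Z ω)) = condMutI p X W (fun ω => (Y₂ ω, Z ω))) :
    condMutI p X Y₁ (fun ω => (W ω, Z ω)) - condMutI p X Y₂ (fun ω => (W ω, Z ω)) =
      condMutI p X Y₁ Z - condMutI p X Y₂ Z := by
  rw [sub_eq_sub_iff_sub_eq_sub, condMutI_sub_condMutI_comm p X Y₁,
    condMutI_sub_condMutI_comm p X Y₂, h]

end Entropy

theorem switch_channel_outer_bound_collapse_general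
    {Ω αU α1 α2 β1 β2 : Type*} [Fintype Ω] [Fintype αU] [Fintype α1] [Fintype α2]
    [Fintype β1] [Fintype β2] (p : Ω → ℝ)
    (U : Ω → αU) (V1 : Ω → α1) (V2 : Ω → α2) (Y1 : Ω → β1) (Y2 : Ω → β2)
    (h : condMutI p V1 V2 (fun ω => (Y1 ω, U ω)) = condMutI p V1 V2 (fun ω => (Y2 ω, U ω))) :
    (condMutI p V1 Y1 (fun ω => (V2 ω, U ω)) - condMutI p V1 Y2 (fun ω => (V2 ω, U ω))
        = condMutI p V1 Y1 U - condMutI p V1 Y2 U)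
    ∧
    (condMutI p V2 Y2 (fun ω => (V1 ω, U ω)) - condMutI p V2 Y1 (fun ω => (V1 ω, U ω))
        = condMutI p V2 Y2 U - condMutI p V2 Y1 U) := by
  refine ⟨condMutI_sub_eq_of_condMutI_eq p V1 V2 Y1 Y2 U h,
    condMutI_sub_eq_of_condMutI_eq p V2 V1 Y2 Y1 U ?_⟩
  rw [condMutI_comm p V2 V1, condMutI_comm p V2 V1, h]

/-- Collapse of the outer bound onto the inner bound for the switch channel:
under `I(V1;V2|U) = I(V1;V2|Y1,U) = I(V1;V2|Y2,U) = 0`, the two expressions inside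
each minimum of the outer bound of Theorem 1 coincide. -/
theorem switch_channel_outer_bound_collapse
    {Ω αU α1 α2 β1 β2 : Type*} [Fintype Ω] [Fintype αU] [Fintype α1] [Fintype α2]
    [Fintype β1] [Fintype β2]
    (p : Ω → ℝ) (hp : ∀ ω, 0 ≤ p ω) (hp1 : ∑ ω, p ω = 1)
    (U : Ω → αU) (V1 : Ω → α1) (V2 : Ω → α2) (Y1 : Ω → β1) (Y2 : Ω → β2)
    (h0 : condMutI p V1 V2 U = 0)
    (h1 : condMutI p V1 V2 (fun ω => (Y1 ω, U ω)) = 0)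
    (h2 : condMutI p V1 V2 (fun ω => (Y2 ω, U ω)) = 0) :
    (condMutI p V1 Y1 (fun ω => (V2 ω, U ω)) - condMutI p V1 Y2 (fun ω => (V2 ω, U ω))
        = condMutI p V1 Y1 U - condMutI p V1 Y2 U)
    ∧
    (condMutI p V2 Y2 (fun ω => (V1 ω, U ω)) - condMutI p V2 Y1 (fun ω => (V1 ω, U ω))
        = condMutI p V2 Y2 U - condMutI p V2 Y1 U) :=
  switch_channel_outer_bound_collapse_general p U V1 V2 Y1 Y2 (h1.trans h2.symm)
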